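/- Let p = (p₀,p₁,p₂;q₁,q₂) ∈ ℝ⁵ satisfy s(p) = 0 (i.e. q₁+q₂ = p₀+p₁+p₂), p₁ > q₁−p₀ > 0 and p₂ > q₂−p₀ > 0. Let a = (a₀,a₁,a₂;b₁,b₂) ∈ ℂ⁵ with Re s(a) > 0 and such that aᵢ + n·pᵢ ∉ ℤ≤0 for all n ≥ 0 and i = 0,1,2 (so each series ₃f₂(a+np) is defined). Then as n → +∞, ₃f₂(a+np) = Γ(s(a)) · s₂(p)^{−s(a)} · n^{−2s(a)} · (1 + O(1/n)), where s₂(p) := p₀p₁ + p₁p₂ + p₂p₀ − q₁q₂; here f(n) = g(n)·(1+O(1/n)) means there exist K > 0 and N with |f(n)/g(n) − 1| ≤ K/n for n ≥ N. -/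

import Mathlib

open Complex

/-!
The series at `a + np` does not lend itself to a term-by-term limit, but its Thomae transform does.
Write `Aᵢ = aᵢ + n pᵢ`, `Bᵢ = bᵢ + n qᵢ`; since `s(p) = 0`, the balance `s = s(a + np)` does not
depend on `n`. Summing the double series
`∑ₘ ∑ⱼ (B₁-A₀)ₘ/m! (B₂-A₀)ₘ (A₁)ⱼ/j! Γ(A₂+j)/Γ(B₁+B₂-A₀+m+j)`
in the two possible orders, each inner sum being evaluated by Gauss's theorem (`gauss_sum`), gives
(`thomae`, `eventually_thomae`)
`₃f₂(a+np) = Γ(s) · Γ(A₁)/Γ(A₁+s) · Γ(A₂)/Γ(A₂+s)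
  · ∑ₘ (s)ₘ/m! · (B₁-A₀)ₘ (B₂-A₀)ₘ / ((A₁+s)ₘ (A₂+s)ₘ)`.

Every factor on the right is now regular in `n`:

* `Γ(A + s) / Γ(A)` is `ρˢ (1 + O(1/ρ))` for `A = a + ρ`, by Watson's lemma applied to the Beta
  integral (`gamma_ratio`).
* The ratio of Pochhammer symbols is a product of `m` factors, each tending to
  `z = (q₁-p₀)(q₂-p₀)/(p₁p₂)`, with `0 < z < 1` by the hypotheses on `p`. The factors are dominated,
  uniformly in `n`, by `(L x + k)/(L p + k)` with fixed `x < p` and `L` as large as desired, so that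
  their product decays faster than any prescribed power of `m`. Hence the sum tends to the binomial
  series `∑ (s)ₘ/m! zᵐ = (1-z)⁻ˢ` with error `O(1/n)` (`sum_approx`, `transformed_approx`).

Multiplying, the leading term is `Γ(s) (n p₁)⁻ˢ (n p₂)⁻ˢ (1-z)⁻ˢ`, and `p₁ p₂ (1-z) = s₂(p)`
because `q₁ + q₂ = p₀ + p₁ + p₂`.
-/

/-! ### The binomial series and Gauss's summation theorem -/

/-- The coefficient `(a)ₘ / m!` of `tᵐ` in `(1 - t)⁻ᵃ`. -/
noncomputable def bincoef (a : ℂ) (m : ℕ) : ℂ := ∏ k ∈ Finset.range m, (a + k) / (1 + k)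

/-- The Pochhammer symbol `(a)ₘ = a (a + 1) ⋯ (a + m - 1)`. -/
noncomputable def poch (a : ℂ) (m : ℕ) : ℂ := ∏ k ∈ Finset.range m, (a + k)

lemma poch_one (m : ℕ) : poch 1 m = Gamma (1 + m) := by
  rw [add_comm, Gamma_nat_eq_factorial]
  induction m with
  | zero => simp [poch]
  | succ m ih =>
    rw [poch, Finset.prod_range_succ, ← poch, ih, Nat.factorial_succ]
    push_cast; ring

lemma bincoef_eq (a : ℂ) (m : ℕ) : bincoef a m = poch a m / Gamma (1 + m) := by
  rw [← poch_one, bincoef, poch, poch, Finset.prod_div_distrib]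

lemma Gamma_add_nat {a : ℂ} (ha : 0 < a.re) (m : ℕ) : Gamma (a + m) = Gamma a * poch a m := by
  induction m with
  | zero => simp [poch]
  | succ m ih =>
    have h : a + m ≠ 0 := fun h => by
      have := congrArg re h
      simp at this
      have : (0:ℝ) ≤ m := m.cast_nonneg
      linarith
    rw [poch, Finset.prod_range_succ, ← poch, ← mul_assoc, ← ih, Nat.cast_succ, ← add_assoc,
      Gamma_add_one _ h, mul_comm]

lemma choose_eq_bincoef (a : ℂ) (m : ℕ) : Ring.choose (a + m - 1) m = bincoef a m := by
  have h1 : Ring.choose (a + m - 1) m = Ring.multichoose a m := by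
    rw [Ring.choose]; congr 1; ring
  have h2 := Ring.factorial_nsmul_multichoose_eq_ascPochhammer a m
  have h3 : (ascPochhammer ℕ m).smeval a = poch a m := by
    rw [Polynomial.ascPochhammer_smeval_eq_eval]
    induction m with
    | zero => simp [poch]
    | succ m ih =>
      rw [poch, Finset.prod_range_succ, ← poch, ascPochhammer_succ_eval, ih]
      · rw [Ring.choose]; congr 1; ring
      · exact Ring.factorial_nsmul_multichoose_eq_ascPochhammer a m
  rw [h1, bincoef_eq, ← h3, ← h2, add_comm, Gamma_nat_eq_factorial, nsmul_eq_mul]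
  field_simp [Nat.cast_ne_zero.mpr (Nat.factorial_ne_zero m)]

/-- The binomial series `∑ (a)ₘ/m! tᵐ = (1 - t)⁻ᵃ`. -/
lemma hasSum_binomial (a : ℂ) {t : ℂ} (ht : ‖t‖ < 1) :
    HasSum (fun m => bincoef a m * t ^ m) ((1 - t) ^ (-a)) := by
  have h := (one_div_one_sub_cpow_hasFPowerSeriesOnBall_zero a).hasSum (y := t)
    (by simpa [enorm_eq_nnnorm, ← NNReal.coe_lt_coe] using ht)
  simp only [FormalMultilinearSeries.ofScalars_apply_eq, smul_eq_mul, zero_add] at h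
  rw [cpow_neg, ← one_div]
  simpa only [choose_eq_bincoef] using h

lemma norm_bincoef_le (a : ℂ) (m : ℕ) : ‖bincoef a m‖ ≤ ‖bincoef ‖a‖ m‖ := by
  rw [bincoef, bincoef, norm_prod, norm_prod]
  refine Finset.prod_le_prod (fun _ _ => norm_nonneg _) fun k _ => ?_
  rw [norm_div, norm_div]
  gcongr
  have : ((‖a‖ : ℂ) + k) = ((‖a‖ + k : ℝ) : ℂ) := by push_cast; rfl
  rw [this, norm_real, Real.norm_of_nonneg (by positivity)]
  exact (norm_add_le _ _).trans (by simp)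

lemma bincoef_ofReal {r : ℝ} (hr : 0 ≤ r) (m : ℕ) : bincoef r m = (‖bincoef r m‖ : ℝ) := by
  have : bincoef r m = ((∏ k ∈ Finset.range m, (r + k) / (1 + k) : ℝ) : ℂ) := by
    rw [bincoef]; push_cast; rfl
  rw [this, norm_real, Real.norm_of_nonneg (Finset.prod_nonneg fun k _ => by positivity)]

lemma hasSum_norm_binomial (a : ℂ) {t : ℝ} (h0 : 0 ≤ t) (ht : t < 1) :
    HasSum (fun m => ‖bincoef ‖a‖ m‖ * t ^ m) ((1 - t) ^ (-‖a‖)) := by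
  have h := hasSum_binomial ‖a‖ (t := t) (by simpa [abs_of_nonneg h0] using ht)
  rw [← hasSum_ofReal, ofReal_cpow (by linarith)]
  have e : ∀ m, bincoef ‖a‖ m = (‖bincoef ‖a‖ m‖ : ℝ) := bincoef_ofReal (norm_nonneg a)
  push_cast
  simpa only [← e] using h

/-- **Gauss's summation theorem** for `₂F₁(a, b; c; 1)`: integrate the binomial series of
`(1 - t)⁻ᵃ` against the Beta density `t^(b-1) (1-t)^(c-b-1)`. The condition `‖a‖ < Re (c - b)` is
stronger than necessary for the identity, but makes the series of moduli `(1 - t)^(-‖a‖)` an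
integrable majorant. -/
lemma gauss_sum {a b c : ℂ} (hb : 0 < b.re) (hc : ‖a‖ < (c - b).re) :
    HasSum (fun m : ℕ => bincoef a m * Gamma (b + m) / Gamma (c + m))
      (Gamma b * Gamma (c - a - b) / (Gamma (c - a) * Gamma (c - b))) := by
  have hcb : 0 < (c - b).re := (norm_nonneg a).trans_lt hc
  have hcab : 0 < (c - a - b).re := by
    have := (abs_re_le_norm a).trans_lt hc
    have := le_abs_self a.re
    simp at *; linarith
  set w : ℝ → ℂ := fun t => (t : ℂ) ^ (b - 1) * (1 - (t : ℂ)) ^ (c - b - 1) with hw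
  have hne : ∀ᵐ t : ℝ, t ≠ 1 := by
    simp [MeasureTheory.ae_iff]
  have hI : Set.uIoc (0:ℝ) 1 = Set.Ioc 0 1 := Set.uIoc_of_le zero_le_one
  have key : HasSum (fun m : ℕ => ∫ t in (0:ℝ)..1, bincoef a m * (t : ℂ) ^ m * w t)
      (∫ t in (0:ℝ)..1, (1 - (t:ℂ)) ^ (-a) * w t) := by
    refine intervalIntegral.hasSum_integral_of_dominated_convergence
      (fun m t => ‖bincoef ‖a‖ m‖ * t ^ m * ‖w t‖) ?_ ?_ ?_ ?_ ?_
    · intro m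
      have := (intervalIntegrable_iff.1 (betaIntegral_convergent hb hcb)).aestronglyMeasurable
      exact MeasureTheory.AEStronglyMeasurable.mul (by fun_prop) this
    · intro m
      refine .of_forall fun t ht => ?_
      rw [hI] at ht
      rw [norm_mul, norm_mul, norm_pow, norm_real, Real.norm_of_nonneg ht.1.le]
      gcongr
      exacts [pow_nonneg ht.1.le _, norm_bincoef_le a m]
    · filter_upwards [hne] with t ht ht'
      rw [hI] at ht'
      exact (hasSum_norm_binomial a ht'.1.le (lt_of_le_of_ne ht'.2 ht)).summable.mul_right _
      -- The series of moduli sums to `(1 - t)^(-‖a‖)`, so the majorant is again a Beta integrand.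
    · have := (betaIntegral_convergent (u := b) (v := c - b - ‖a‖) hb (by simpa using hc)).norm
      refine this.congr_ae ?_
      rw [Filter.EventuallyEq, MeasureTheory.ae_restrict_iff' measurableSet_uIoc]
      filter_upwards [hne] with t ht ht'
      rw [hI] at ht'
      have h1 : 0 < 1 - t := sub_pos.2 (lt_of_le_of_ne ht'.2 ht)
      rw [((hasSum_norm_binomial a ht'.1.le (by linarith)).mul_right _).tsum_eq]
      have : (1 - (t : ℂ)) = ((1 - t : ℝ) : ℂ) := by push_cast; rfl
      simp only [hw, norm_mul, this, norm_cpow_eq_rpow_re_of_pos h1]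
      rw [mul_left_comm, ← Real.rpow_add h1]
      congr 2
      simp; ring
    · filter_upwards [hne] with t ht ht'
      rw [hI] at ht'
      exact (hasSum_binomial a (by
        rw [norm_real, Real.norm_of_nonneg ht'.1.le]; exact lt_of_le_of_ne ht'.2 ht)).mul_right _
  have e1 : ∫ t in (0:ℝ)..1, (1 - (t:ℂ)) ^ (-a) * w t = betaIntegral b (c - a - b) := by
    rw [betaIntegral]
    refine intervalIntegral.integral_congr_ae ?_
    filter_upwards [hne] with t ht ht'
    rw [hI] at ht'
    have h1 : 1 - (t : ℂ) ≠ 0 := by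
      rw [sub_ne_zero]; exact_mod_cast ht.symm
    simp only [hw]
    rw [mul_left_comm, ← cpow_add _ _ h1]
    congr 2
    ring
  have e2 : ∀ m : ℕ, ∫ t in (0:ℝ)..1, bincoef a m * (t : ℂ) ^ m * w t =
      bincoef a m * betaIntegral (b + m) (c - b) := by
    intro m
    rw [betaIntegral, ← intervalIntegral.integral_const_mul]
    refine intervalIntegral.integral_congr_ae (.of_forall fun t ht => ?_)
    rw [hI] at ht
    have h1 : (t : ℂ) ≠ 0 := by exact_mod_cast ht.1.ne'
    simp only [hw]
    rw [mul_assoc, ← mul_assoc (_ ^ m), ← cpow_natCast, ← cpow_add _ _ h1]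
    congr 4
    ring
  simp_rw [e2] at key
  rw [e1] at key
  have := key.mul_right (Gamma (c - b))⁻¹
  have hG := Gamma_ne_zero_of_re_pos hcb
  convert! this using 1
  · funext m
    rw [betaIntegral_eq_Gamma_mul_div _ _ (by simp; positivity) hcb]
    rw [show b + m + (c - b) = c + m by ring]
    field_simp
  · rw [betaIntegral_eq_Gamma_mul_div _ _ hb hcab]
    rw [show b + (c - a - b) = c - a by ring]
    field_simp

/-! ### Thomae's transformation -/

lemma norm_poch_le (a : ℂ) (m : ℕ) : ‖poch a m‖ ≤ ‖poch ‖a‖ m‖ := by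
  rw [poch, poch, norm_prod, norm_prod]
  refine Finset.prod_le_prod (fun _ _ => norm_nonneg _) fun k _ => ?_
  have : ((‖a‖ : ℂ) + k) = ((‖a‖ + k : ℝ) : ℂ) := by push_cast; rfl
  rw [this, norm_real, Real.norm_of_nonneg (by positivity)]
  exact (norm_add_le _ _).trans (by simp)

lemma norm_poch_re_le {a : ℂ} (ha : 0 < a.re) (m : ℕ) : ‖poch a.re m‖ ≤ ‖poch a m‖ := by
  rw [poch, poch, norm_prod, norm_prod]
  refine Finset.prod_le_prod (fun _ _ => norm_nonneg _) fun k _ => ?_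
  have : ((a.re : ℂ) + k) = ((a.re + k : ℝ) : ℂ) := by push_cast; rfl
  rw [this, norm_real, Real.norm_of_nonneg (by positivity)]
  simpa using re_le_norm (a + k)

lemma poch_ne_zero {a : ℂ} (ha : 0 < a.re) (m : ℕ) : poch a m ≠ 0 := by
  refine Finset.prod_ne_zero_iff.2 fun k _ h => ?_
  have := congrArg re h
  simp at this
  have : (0:ℝ) ≤ k := k.cast_nonneg
  linarith

/-- For a series of nonnegative reals, written over `ℂ`, the moduli sum to the modulus of the
sum. -/
lemma hasSum_norm_of_nonneg {f : ℕ → ℂ} {z : ℂ} (hf : HasSum f z)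
    (h : ∀ j, f j = (‖f j‖ : ℝ)) : HasSum (fun j => ‖f j‖) ‖z‖ := by
  have hs := hf.summable.norm.hasSum
  have h2 : HasSum f ((∑' j, ‖f j‖ : ℝ) : ℂ) := by
    have := hasSum_ofReal.2 hs
    convert! this using 1
    exact funext h
  rw [hf.unique h2, norm_real, Real.norm_of_nonneg (tsum_nonneg fun _ => norm_nonneg _)]
  exact hs

/-- Absolute convergence of the double series behind Thomae's transformation: moduli of
parameters dominate it by a series with positive parameters, whose inner sum over `x.2`
is evaluated by Gauss's theorem. The hypothesis `hsum` is the convergence of the remaining outer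
sum. -/
lemma summable_double {a1 a2 α β c : ℂ} (ha1 : 0 < a1.re) (ha2 : 0 < a2.re)
    (hc : ‖a1‖ + ‖a2‖ < c.re)
    (hsum : Summable fun m : ℕ => ‖bincoef (c.re - ‖a1‖ - ‖a2‖ : ℝ) m * (poch ‖α‖ m * poch ‖β‖ m /
      (poch (c.re - ‖a2‖ : ℝ) m * poch (c.re - ‖a1‖ : ℝ) m))‖) :
    Summable fun x : ℕ × ℕ => bincoef α x.1 * poch β x.1 *
      (bincoef a1 x.2 * Gamma (a2 + x.2) / Gamma (c + x.1 + x.2)) := by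
  set u := ‖a1‖ with hu
  set v := ‖a2‖ with hv
  have hu0 : 0 < u := ha1.trans_le (re_le_norm a1)
  have hv0 : 0 < v := ha2.trans_le (re_le_norm a2)
  have hc0 : 0 < c.re := by linarith
  set t : ℕ → ℕ → ℂ := fun m j => bincoef u j * Gamma (v + j) / Gamma ((c.re : ℂ) + m + j) with ht
  have htnn : ∀ m j, t m j = (‖t m j‖ : ℝ) := by
    intro m j
    have h1 : t m j =
        ((‖bincoef u j‖ * Real.Gamma (v + j) / Real.Gamma (c.re + m + j) : ℝ) : ℂ) := by
      rw [ht]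
      push_cast [← Gamma_ofReal]
      rw [← bincoef_ofReal hu0.le]
    have h2 : 0 ≤ ‖bincoef u j‖ * Real.Gamma (v + j) / Real.Gamma (c.re + m + j) := by
      have := Real.Gamma_pos_of_pos (show 0 < v + j by positivity)
      have := Real.Gamma_pos_of_pos (show 0 < c.re + m + j by positivity)
      positivity
    rw [h1, norm_real, Real.norm_of_nonneg h2]
  have hg : ∀ m : ℕ, HasSum (fun j => ‖t m j‖)
      ‖Gamma v * Gamma ((c.re - u - v : ℝ) + m) /
        (Gamma ((c.re - u : ℝ) + m) * Gamma ((c.re - v : ℝ) + m))‖ := by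
    intro m
    have h := gauss_sum (a := u) (b := v) (c := (c.re : ℂ) + m) (by simpa using hv0) (by
      simp only [norm_real, norm_norm, sub_re, add_re, ofReal_re, natCast_re, hu]
      have : (0:ℝ) ≤ m := m.cast_nonneg
      linarith)
    have := hasSum_norm_of_nonneg h (htnn m)
    rw [show (c.re : ℂ) + m - u - v = (c.re - u - v : ℝ) + m by push_cast; ring,
      show (c.re : ℂ) + m - u = (c.re - u : ℝ) + m by push_cast; ring,
      show (c.re : ℂ) + m - v = (c.re - v : ℝ) + m by push_cast; ring] at this
    exact this
  set K : ℝ := ‖Gamma a2‖ / ‖Gamma v‖ * (‖Gamma c.re‖ / ‖Gamma c‖) with hK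
  have hG1 := Gamma_ne_zero_of_re_pos (s := v) (by simpa using hv0)
  have hG2 := Gamma_ne_zero_of_re_pos (s := c.re) (by simpa using hc0)
  have hG3 := Gamma_ne_zero_of_re_pos hc0
  -- Summing over `x.2` first leaves exactly the series in `hsum`.
  have hmain : Summable fun x : ℕ × ℕ => ‖bincoef ‖α‖ x.1‖ * ‖poch ‖β‖ x.1‖ * ‖t x.1 x.2‖ := by
    refine (summable_prod_of_nonneg fun x => by positivity).2 ⟨fun m => ?_, ?_⟩
    · exact (hg m).summable.mul_left (‖bincoef ‖α‖ m‖ * ‖poch ‖β‖ m‖)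
    · simp only [tsum_mul_left, (hg _).tsum_eq]
      refine (hsum.mul_left ‖Gamma v * Gamma (c.re - u - v : ℝ) /
        (Gamma (c.re - u : ℝ) * Gamma (c.re - v : ℝ))‖).congr fun m => ?_
      rw [Gamma_add_nat (by rw [ofReal_re]; linarith), Gamma_add_nat (by rw [ofReal_re]; linarith),
        Gamma_add_nat (by rw [ofReal_re]; linarith), ← norm_mul, ← norm_mul, ← norm_mul,
        bincoef_eq, bincoef_eq]
      congr 1
      ring
  -- Rewriting Gamma values as Pochhammer symbols reduces the comparison to factorwise bounds.
  refine Summable.of_norm_bounded (hmain.mul_left K) fun ⟨m, j⟩ => ?_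
  have e2 : Gamma (a2 + j) = Gamma a2 * poch a2 j := Gamma_add_nat ha2 j
  have e3 : Gamma ((v : ℂ) + j) = Gamma v * poch v j := Gamma_add_nat (by simpa using hv0) j
  have e4 : Gamma (c + m + j) = Gamma c * poch c (m + j) := by
    rw [← Gamma_add_nat hc0]; push_cast; ring_nf
  have e5 : Gamma ((c.re : ℂ) + m + j) = Gamma c.re * poch c.re (m + j) := by
    rw [← Gamma_add_nat (by simpa using hc0)]; push_cast; ring_nf
  have i1 := norm_bincoef_le α m
  have i2 := norm_poch_le β m
  have i3 := norm_bincoef_le a1 j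
  have i4 := norm_poch_le a2 j
  have i5 := norm_poch_re_le hc0 (m + j)
  have i6 : 0 < ‖poch c.re (m + j)‖ := norm_pos_iff.2 (poch_ne_zero (by simpa using hc0) _)
  simp only [ht, e2, e3, e4, e5, norm_mul, norm_div, hK]
  rw [← hv] at i4
  rw [← hu] at i3
  have n1 := norm_pos_iff.2 hG1
  have n2 := norm_pos_iff.2 hG2
  have n3 := norm_pos_iff.2 hG3
  calc _ ≤ ‖bincoef ‖α‖ m‖ * ‖poch ‖β‖ m‖ * (‖bincoef u j‖ * (‖Gamma a2‖ * ‖poch v j‖) /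
        (‖Gamma c‖ * ‖poch c.re (m + j)‖)) := by gcongr
    _ = _ := by field_simp

/-- **Thomae's transformation** of the renormalized series. The double series of `summable_double`
is summed first over `m`, which gives the left-hand side, and then over `j`, which gives the
right-hand side. -/
lemma thomae {a0 a1 a2 b1 b2 s : ℂ} (hs : s = b1 + b2 - a0 - a1 - a2)
    (ha1 : 0 < a1.re) (ha2 : 0 < a2.re) (hβ : 0 < (b2 - a0).re) (hα : ‖b1 - a0‖ < b1.re)
    (hc : ‖a1‖ + ‖a2‖ < (b1 + b2 - a0).re)
    (hsum : Summable fun m : ℕ => ‖bincoef ((b1 + b2 - a0).re - ‖a1‖ - ‖a2‖ : ℝ) m *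
      (poch ‖b1 - a0‖ m * poch ‖b2 - a0‖ m /
      (poch ((b1 + b2 - a0).re - ‖a2‖ : ℝ) m * poch ((b1 + b2 - a0).re - ‖a1‖ : ℝ) m))‖) :
    ∑' j : ℕ, (Gamma (a0 + j) * Gamma (a1 + j) * Gamma (a2 + j)) /
        (Gamma (1 + j) * Gamma (b1 + j) * Gamma (b2 + j)) =
      Gamma s * (Gamma a1 / Gamma (a1 + s)) * (Gamma a2 / Gamma (a2 + s)) *
        ∑' m : ℕ, bincoef s m * (poch (b1 - a0) m * poch (b2 - a0) m /
          (poch (a1 + s) m * poch (a2 + s) m)) := by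
  have hS := summable_double (α := b1 - a0) (β := b2 - a0) ha1 ha2 hc hsum
  have r1 := re_le_norm a1
  have r2 := re_le_norm a2
  have hs0 : 0 < s.re := by
    rw [hs]; simp at hc ⊢; linarith
  have hcomm := hS.tsum_comm (f := fun m j => bincoef (b1 - a0) m * poch (b2 - a0) m *
      (bincoef a1 j * Gamma (a2 + j) / Gamma (b1 + b2 - a0 + m + j)))
  have hG1 := Gamma_ne_zero_of_re_pos ha1
  have hGβ := Gamma_ne_zero_of_re_pos hβ
  have L : ∀ j : ℕ, ∑' m : ℕ, bincoef (b1 - a0) m * poch (b2 - a0) m *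
      (bincoef a1 j * Gamma (a2 + j) / Gamma (b1 + b2 - a0 + m + j)) =
      (Gamma a1)⁻¹ * ((Gamma (a0 + j) * Gamma (a1 + j) * Gamma (a2 + j)) /
        (Gamma (1 + j) * Gamma (b1 + j) * Gamma (b2 + j))) := by
    intro j
    have h := gauss_sum (a := b1 - a0) (b := b2 - a0) (c := b1 + b2 - a0 + j) hβ (by
      have : (0:ℝ) ≤ j := j.cast_nonneg
      simp at hα ⊢; linarith)
    have h' := (h.mul_left (bincoef a1 j * Gamma (a2 + j) / Gamma (b2 - a0))).tsum_eq
    rw [show b1 + b2 - a0 + j - (b1 - a0) - (b2 - a0) = a0 + j by ring,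
      show b1 + b2 - a0 + j - (b1 - a0) = b2 + j by ring,
      show b1 + b2 - a0 + j - (b2 - a0) = b1 + j by ring] at h'
    have e : (Gamma a1)⁻¹ * ((Gamma (a0 + j) * Gamma (a1 + j) * Gamma (a2 + j)) /
        (Gamma (1 + j) * Gamma (b1 + j) * Gamma (b2 + j))) =
        bincoef a1 j * Gamma (a2 + j) / Gamma (b2 - a0) * (Gamma (b2 - a0) * Gamma (a0 + j) /
          (Gamma (b2 + j) * Gamma (b1 + j))) := by
      rw [bincoef_eq, Gamma_add_nat ha1]
      field_simp
    rw [e, ← h']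
    congr 1
    funext m
    rw [Gamma_add_nat hβ, show b1 + b2 - a0 + (j : ℂ) + m = b1 + b2 - a0 + m + j by ring]
    field_simp
  have Rr : ∀ m : ℕ, ∑' j : ℕ, bincoef (b1 - a0) m * poch (b2 - a0) m *
      (bincoef a1 j * Gamma (a2 + j) / Gamma (b1 + b2 - a0 + m + j)) =
      (Gamma a2 * Gamma s / (Gamma (a1 + s) * Gamma (a2 + s))) *
      (bincoef s m * (poch (b1 - a0) m * poch (b2 - a0) m /
          (poch (a1 + s) m * poch (a2 + s) m))) := by
    intro m
    have h := gauss_sum (a := a1) (b := a2) (c := b1 + b2 - a0 + m) ha2 (by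
      have : (0:ℝ) ≤ m := m.cast_nonneg
      simp at hc ⊢; linarith)
    rw [tsum_mul_left, h.tsum_eq, show b1 + b2 - a0 + m - a1 - a2 = s + m by rw [hs]; ring,
      show b1 + b2 - a0 + m - a1 = (a2 + s) + m by rw [hs]; ring,
      show b1 + b2 - a0 + m - a2 = (a1 + s) + m by rw [hs]; ring,
      Gamma_add_nat hs0, Gamma_add_nat (by simp; linarith), Gamma_add_nat (by simp; linarith),
      bincoef_eq, bincoef_eq]
    ring
  simp only [L, Rr, tsum_mul_left] at hcomm
  rw [inv_mul_eq_iff_eq_mul₀ hG1] at hcomm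
  rw [hcomm]
  ring

/-! ### Ratios of Gamma values -/

/-- The Beta integral after the substitution `t = e⁻ˣ`. -/
lemma betaIntegral_exp {z s : ℂ} (hz : 0 < z.re) (hs : 0 < s.re) :
    MeasureTheory.IntegrableOn
      (fun x : ℝ => exp (-z * x) * (1 - (Real.exp (-x) : ℂ)) ^ (s - 1)) (Set.Ioi 0) ∧
    ∫ x : ℝ in Set.Ioi 0, exp (-z * x) * (1 - (Real.exp (-x) : ℂ)) ^ (s - 1) =
      betaIntegral z s := by
  have himg : (fun x : ℝ => Real.exp (-x)) '' Set.Ioi 0 = Set.Ioo 0 1 := by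
    ext t
    constructor
    · rintro ⟨x, hx, rfl⟩
      exact ⟨Real.exp_pos _, Real.exp_lt_one_iff.2 (neg_lt_zero.2 hx)⟩
    · rintro ⟨h0, h1⟩
      exact ⟨-Real.log t, neg_pos.2 (Real.log_neg h0 h1), by simp [Real.exp_log h0]⟩
  have hder : ∀ x ∈ Set.Ioi (0:ℝ), HasDerivWithinAt (fun x : ℝ => Real.exp (-x))
      (-Real.exp (-x)) (Set.Ioi 0) x := fun x _ => by
    simpa using (((hasDerivAt_neg x).exp).hasDerivWithinAt)
  have hinj : Set.InjOn (fun x : ℝ => Real.exp (-x)) (Set.Ioi 0) := fun x _ y _ h => by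
    simpa using h
  set g : ℝ → ℂ := fun t => (t : ℂ) ^ (z - 1) * (1 - (t : ℂ)) ^ (s - 1) with hg
  have hpt : ∀ x : ℝ, |-Real.exp (-x)| • g (Real.exp (-x)) =
      exp (-z * x) * (1 - (Real.exp (-x) : ℂ)) ^ (s - 1) := by
    intro x
    have hne : ((Real.exp (-x) : ℝ) : ℂ) ≠ 0 := by exact_mod_cast (Real.exp_pos (-x)).ne'
    rw [abs_neg, abs_of_pos (Real.exp_pos _), hg, real_smul, ← mul_assoc]
    congr 1
    have : ((Real.exp (-x) : ℝ) : ℂ) * ((Real.exp (-x) : ℝ) : ℂ) ^ (z - 1) =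
        ((Real.exp (-x) : ℝ) : ℂ) ^ z := by
      rw [cpow_sub _ _ hne, cpow_one]
      field_simp
    rw [this, cpow_def_of_ne_zero hne, ← ofReal_log (Real.exp_pos _).le, Real.log_exp]
    congr 1; push_cast; ring
  have h1 := MeasureTheory.integrableOn_image_iff_integrableOn_abs_deriv_smul measurableSet_Ioi
    hder hinj g
  have h2 := MeasureTheory.integral_image_eq_integral_abs_deriv_smul measurableSet_Ioi hder hinj g
  rw [himg] at h1 h2
  simp only [hpt] at h1 h2
  constructor
  · rw [← h1]
    exact (intervalIntegrable_iff_integrableOn_Ioo_of_le zero_le_one).1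
      (betaIntegral_convergent hz hs)
  · rw [← h2, betaIntegral, intervalIntegral.integral_of_le zero_le_one,
      MeasureTheory.integral_Ioc_eq_integral_Ioo]

lemma abs_log_one_sub_exp_div_le {x : ℝ} (hx : 0 < x) :
    |Real.log ((1 - Real.exp (-x)) / x)| ≤ x := by
  have h1 : Real.exp (-x) < 1 := Real.exp_lt_one_iff.2 (by linarith)
  have hpos : 0 < (1 - Real.exp (-x)) / x := div_pos (by linarith) hx
  have hle : (1 - Real.exp (-x)) / x ≤ 1 := by
    rw [div_le_one hx]
    linarith [Real.add_one_le_exp (-x)]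
  rw [abs_of_nonpos (Real.log_nonpos hpos.le hle)]
  have : Real.exp (-x) ≤ (1 - Real.exp (-x)) / x := by
    rw [le_div_iff₀ hx]
    have h3 := Real.add_one_le_exp x
    have h4 : Real.exp (-x) * Real.exp x = 1 := by rw [← Real.exp_add]; simp
    nlinarith [Real.exp_pos (-x)]
  have := (Real.le_log_iff_exp_le hpos).2 this
  linarith

/-- Pointwise comparison of the Beta integrand with the Gamma integrand. -/
lemma norm_beta_sub_gamma_le (a s : ℂ) (ρ : ℝ) {x : ℝ} (hx : 0 < x) :
    ‖exp (-(a + ρ) * x) * (1 - (Real.exp (-x) : ℂ)) ^ (s - 1) -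
      (x : ℂ) ^ (s - 1) * exp (-(ρ * x))‖ ≤
      (‖a‖ + ‖s - 1‖) * (x ^ (s.re + 1 - 1) * Real.exp (-((ρ - (‖a‖ + ‖s - 1‖)) * x))) := by
  set C := ‖a‖ + ‖s - 1‖ with hC
  set l := Real.log ((1 - Real.exp (-x)) / x) with hl
  have h1 : 0 < 1 - Real.exp (-x) := by
    have : Real.exp (-x) < 1 := Real.exp_lt_one_iff.2 (by linarith)
    linarith
  set w : ℂ := -a * x + (s - 1) * l with hw
  have hwn : ‖w‖ ≤ C * x := by
    have := abs_log_one_sub_exp_div_le hx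
    calc ‖w‖ ≤ ‖-a * x‖ + ‖(s - 1) * l‖ := norm_add_le _ _
      _ = ‖a‖ * x + ‖s - 1‖ * |l| := by
        rw [norm_mul, norm_mul, norm_neg, norm_real, norm_real, Real.norm_of_nonneg hx.le,
          Real.norm_eq_abs]
      _ ≤ ‖a‖ * x + ‖s - 1‖ * x := by gcongr
      _ = _ := by rw [hC]; ring
  have hbase : (1 - (Real.exp (-x) : ℂ)) ^ (s - 1) = (x : ℂ) ^ (s - 1) * exp ((s - 1) * l) := by
    have e : (1 - (Real.exp (-x) : ℂ)) = ((1 - Real.exp (-x) : ℝ) : ℂ) := by push_cast; rfl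
    rw [e, cpow_def_of_ne_zero (by exact_mod_cast h1.ne'),
      cpow_def_of_ne_zero (by exact_mod_cast hx.ne'), ← exp_add, ← ofReal_log h1.le,
      ← ofReal_log hx.le, hl, Real.log_div h1.ne' hx.ne']
    congr 1; push_cast; ring
  have heq : exp (-(a + ρ) * x) * (1 - (Real.exp (-x) : ℂ)) ^ (s - 1) -
      (x : ℂ) ^ (s - 1) * exp (-(ρ * x)) =
      (x : ℂ) ^ (s - 1) * exp (-(ρ * x)) * (exp w - 1) := by
    have : exp (-(a + ρ) * x) = exp (-(ρ * x)) * exp (-a * x) := by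
      rw [← exp_add]; congr 1; ring
    rw [hbase, this, hw, exp_add]
    ring
  have hexp : ‖exp w - 1‖ ≤ C * x * Real.exp (C * x) := by
    have := norm_exp_sub_sum_le_norm_mul_exp w 1
    simp at this
    refine this.trans ?_
    gcongr
  have hE : ‖exp (-(ρ * x : ℂ))‖ = Real.exp (-(ρ * x)) := by
    rw [norm_exp]; simp
  rw [heq, norm_mul, norm_mul, hE, norm_cpow_eq_rpow_re_of_pos hx]
  calc _ ≤ x ^ (s - 1).re * Real.exp (-(ρ * x)) * (C * x * Real.exp (C * x)) := by gcongr
    _ = C * ((x ^ (s - 1).re * x) * (Real.exp (-(ρ * x)) * Real.exp (C * x))) := by ring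
    _ = _ := by
      rw [← Real.exp_add, ← Real.rpow_add_one hx.ne']
      congr 3
      · simp
      · ring

/-- `Γ(a + ρ) / Γ(a + ρ + s) = ρ⁻ˢ (1 + O(1/ρ))` as `ρ → ∞`: with `t = e⁻ˣ`, the integrand of
`B(a + ρ, s)` differs from `x^(s-1) e^(-ρx)` by `O(x^(Re s) e^(-(ρ-C)x))`. -/
lemma gamma_ratio (a : ℂ) {s : ℂ} (hs : 0 < s.re) :
    ∃ K R : ℝ, ∀ ρ : ℝ, R ≤ ρ →
      ‖Gamma (a + ρ) / Gamma (a + ρ + s) * (ρ : ℂ) ^ s - 1‖ ≤ K / ρ := by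
  set C := ‖a‖ + ‖s - 1‖ with hC
  have hC0 : 0 ≤ C := by positivity
  set σ := s.re with hσ
  refine ⟨C * 2 ^ (σ + 1) * Real.Gamma (σ + 1) / ‖Gamma s‖, 2 * C + 1, fun ρ hρ => ?_⟩
  have hρ0 : 0 < ρ := by linarith
  have hρC : 0 < ρ - C := by linarith
  have hz : 0 < (a + ρ).re := by
    have h1 := abs_re_le_norm a
    have h2 := neg_abs_le a.re
    have h3 := norm_nonneg (s - 1)
    simp only [add_re, ofReal_re]
    linarith
  have hGs := Gamma_ne_zero_of_re_pos hs
  obtain ⟨hi, he⟩ := betaIntegral_exp hz hs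
  have hg := integral_cpow_mul_exp_neg_mul_Ioi hs hρ0
  have hρc : (ρ : ℂ) ≠ 0 := by exact_mod_cast hρ0.ne'
  have harg : (ρ : ℂ).arg ≠ Real.pi := by
    rw [arg_ofReal_of_nonneg hρ0.le]; exact Real.pi_pos.ne
  have hinv : (1 / (ρ : ℂ)) ^ s = ((ρ : ℂ) ^ s)⁻¹ := by rw [one_div, inv_cpow _ _ harg]
  have hpne : (ρ : ℂ) ^ s ≠ 0 := by simp [cpow_eq_zero_iff, hρc]
  have hgi : MeasureTheory.IntegrableOn (fun x : ℝ => (x : ℂ) ^ (s - 1) * exp (-(ρ * x)))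
      (Set.Ioi 0) := by
    refine MeasureTheory.Integrable.of_integral_ne_zero ?_
    rw [hg, hinv]
    exact mul_ne_zero (inv_ne_zero hpne) hGs
  have hb := Real.integral_rpow_mul_exp_neg_mul_Ioi (a := σ + 1) (by linarith) hρC
  have hbi : MeasureTheory.IntegrableOn
      (fun x : ℝ => x ^ (σ + 1 - 1) * Real.exp (-((ρ - C) * x))) (Set.Ioi 0) := by
    refine MeasureTheory.Integrable.of_integral_ne_zero ?_
    rw [hb]
    have := Real.Gamma_pos_of_pos (show 0 < σ + 1 by linarith)
    positivity
  have hD : ‖betaIntegral (a + ρ) s - (1 / (ρ : ℂ)) ^ s * Gamma s‖ ≤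
      C * ((1 / (ρ - C)) ^ (σ + 1) * Real.Gamma (σ + 1)) := by
    rw [← he, ← hg, ← MeasureTheory.integral_sub hi hgi, ← hb,
      ← MeasureTheory.integral_const_mul]
    refine MeasureTheory.norm_integral_le_of_norm_le (hbi.const_mul C) ?_
    rw [MeasureTheory.ae_restrict_iff' measurableSet_Ioi]
    exact .of_forall fun x hx => norm_beta_sub_gamma_le a s ρ hx
  have hfin : Gamma (a + ρ) / Gamma (a + ρ + s) * (ρ : ℂ) ^ s - 1 =
      (betaIntegral (a + ρ) s - (1 / (ρ : ℂ)) ^ s * Gamma s) * (ρ : ℂ) ^ s / Gamma s := by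
    rw [betaIntegral_eq_Gamma_mul_div _ _ hz hs, hinv]
    field_simp
  rw [hfin, norm_div, norm_mul, norm_cpow_eq_rpow_re_of_pos hρ0]
  have h2 : (1 / (ρ - C)) ^ (σ + 1) ≤ (2 / ρ) ^ (σ + 1) := by
    apply Real.rpow_le_rpow (by positivity) _ (by linarith)
    rw [div_le_div_iff₀ hρC hρ0]; linarith
  have hGp := Real.Gamma_pos_of_pos (show 0 < σ + 1 by linarith)
  calc _ ≤ C * ((2 / ρ) ^ (σ + 1) * Real.Gamma (σ + 1)) * ρ ^ σ / ‖Gamma s‖ := by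
        gcongr
        exact hD.trans (by gcongr)
    _ = _ := by
      rw [Real.div_rpow zero_le_two hρ0.le, Real.rpow_add_one hρ0.ne' σ]
      have : ρ ^ σ ≠ 0 := (Real.rpow_pos_of_pos hρ0 σ).ne'
      field_simp

/-! ### Dominated convergence to the binomial series -/

/-- The binomial coefficients grow at most polynomially: by Bernoulli's inequality each factor
`(H + k) / (1 + k)` is at most `((k + 2) / (k + 1))ᴴ`, and these telescope. -/
lemma norm_bincoef_le_pow {a : ℂ} {H : ℕ} (ha : ‖a‖ ≤ H) (m : ℕ) :
    ‖bincoef a m‖ ≤ ((m : ℝ) + 1) ^ H := by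
  induction m with
  | zero => simp [bincoef]
  | succ m ih =>
    have hm : (0 : ℝ) < 1 + m := by positivity
    rw [bincoef, Finset.prod_range_succ, ← bincoef, norm_mul]
    have h1 : ‖(a + m) / (1 + m)‖ ≤ (1 + (1 + m : ℝ)⁻¹) ^ H := by
      have hb := one_add_mul_le_pow (a := (1 + m : ℝ)⁻¹)
        (by have := inv_pos.2 hm; linarith) H
      refine le_trans ?_ hb
      have e : ‖(1 + m : ℂ)‖ = 1 + m := by
        rw [show (1 + m : ℂ) = ((1 + m : ℝ) : ℂ) by push_cast; rfl, norm_real,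
          Real.norm_of_nonneg hm.le]
      rw [norm_div, e, div_le_iff₀ hm]
      have : (1 + (H : ℝ) * (1 + m : ℝ)⁻¹) * (1 + m) = 1 + m + H := by field_simp
      rw [this]
      have := norm_add_le a m
      simp at this
      linarith
    calc _ ≤ ((m : ℝ) + 1) ^ H * (1 + (1 + m : ℝ)⁻¹) ^ H := by gcongr
      _ = _ := by
        rw [← mul_pow]; congr 1; push_cast; field_simp; ring

/-- The product `∏_{k<m} (X + k) / (D + k)` decays like `m⁻ᴹ` as soon as `D ≥ X + M`. -/
lemma prod_le_pow {X D : ℝ} {M : ℕ} (hX : 0 < X) (hD : 1 ≤ D) (hXD : X + M ≤ D) (m : ℕ) :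
    ∏ k ∈ Finset.range m, (X + k) / (D + k) ≤ (D / (D + m)) ^ M := by
  have hD0 : 0 < D := by linarith
  induction m with
  | zero => simp [div_self hD0.ne']
  | succ m ih =>
    rw [Finset.prod_range_succ]
    have hm : (0 : ℝ) ≤ m := m.cast_nonneg
    have hDm : 0 < D + m := by linarith
    have hDm1 : 0 < D + m + 1 := by linarith
    have h1 : (X + m) / (D + m) ≤ ((D + m) / (D + m + 1)) ^ M := by
      have hb := one_add_mul_le_pow (a := -(D + m + 1)⁻¹)
        (by have := inv_le_one_of_one_le₀ (show 1 ≤ D + m + 1 by linarith); linarith) M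
      have e : 1 + -(D + m + 1)⁻¹ = (D + m) / (D + m + 1) := by field_simp; ring
      rw [e] at hb
      refine le_trans ?_ hb
      have e2 : 1 + (M : ℝ) * -(D + m + 1)⁻¹ = (D + m + 1 - M) / (D + m + 1) := by
        field_simp; ring
      rw [e2, div_le_div_iff₀ hDm hDm1]
      have : (0 : ℝ) ≤ M := M.cast_nonneg
      nlinarith
    calc _ ≤ (D / (D + m)) ^ M * ((D + m) / (D + m + 1)) ^ M := by gcongr
      _ = _ := by
        rw [← mul_pow]; congr 1; push_cast; field_simp; ring

/-- Telescoping comparison of a product with a power: if all factors are dominated by `ρ k`,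
then the errors `e (k + 1)` of the single factors accumulate to at most quadratic growth
relative to the majorant. -/
lemma norm_prod_sub_pow_le {r : ℕ → ℂ} {ρ : ℕ → ℝ} {z ρ0 e : ℝ} (hz : 0 ≤ z) (h0 : 0 < ρ0)
    (hzρ : z ≤ ρ0) (hρ0 : ∀ k, ρ0 ≤ ρ k) (he : 0 ≤ e) (hr : ∀ k, ‖r k‖ ≤ ρ k)
    (hrz : ∀ k : ℕ, ‖r k - z‖ ≤ e * (k + 1)) (m : ℕ) :
    ‖∏ k ∈ Finset.range m, r k - (z : ℂ) ^ m‖ ≤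
      e / ρ0 * (∏ k ∈ Finset.range m, ρ k) * m ^ 2 := by
  have hρpos : ∀ k, 0 < ρ k := fun k => h0.trans_le (hρ0 k)
  induction m with
  | zero => simp
  | succ m ih =>
    rw [Finset.prod_range_succ, Finset.prod_range_succ]
    set P := ∏ k ∈ Finset.range m, r k
    set W := ∏ k ∈ Finset.range m, ρ k with hW
    have hWpos : 0 < W := Finset.prod_pos fun k _ => hρpos k
    have hzW : z ^ m ≤ W := by
      have := Finset.prod_le_prod (s := Finset.range m) (f := fun _ => z) (g := ρ)
        (fun _ _ => hz) (fun k _ => hzρ.trans (hρ0 k))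
      simpa using this
    have e1 : P * r m - (z : ℂ) ^ (m + 1) = (P - (z : ℂ) ^ m) * r m + (z : ℂ) ^ m * (r m - z) := by
      ring
    have hn : ‖(z : ℂ) ^ m‖ = z ^ m := by rw [norm_pow, norm_real, Real.norm_of_nonneg hz]
    calc ‖P * r m - (z : ℂ) ^ (m + 1)‖
        ≤ ‖P - (z : ℂ) ^ m‖ * ‖r m‖ + ‖(z : ℂ) ^ m‖ * ‖r m - z‖ := by
          rw [e1]
          refine (norm_add_le _ _).trans ?_
          rw [norm_mul, norm_mul]
      _ ≤ (e / ρ0 * W * m ^ 2) * ρ m + (W * (ρ m / ρ0)) * (e * (m + 1)) := by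
          rw [hn]
          have h1 : 1 ≤ ρ m / ρ0 := (one_le_div h0).2 (hρ0 m)
          have h2 : z ^ m ≤ W * (ρ m / ρ0) := hzW.trans (le_mul_of_one_le_right hWpos.le h1)
          have h3 := hr m
          have h4 := hrz m
          have h5 := (hρpos m).le
          gcongr
      _ = e / ρ0 * (W * ρ m) * (m ^ 2 + m + 1) := by ring
      _ ≤ _ := by
          have h5 := (hρpos m).le
          gcongr
          push_cast
          have : (0 : ℝ) ≤ m := m.cast_nonneg
          nlinarith

/-- Dominated convergence for a series `∑ (a)ₘ/m! ∏_{k<m} r k`, in quantitative form: if the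
factors `r k` are within `e (k + 1)` of `z`, the sum is within `C e` of `(1 - z)⁻ᵃ`. The factor
bounds `(L x + k) / (L p + k)` serve as a common majorant, and `L` is chosen so large that the
majorant beats the polynomial growth `(m + 1)ᴴ m²`. -/
lemma sum_approx {x p z : ℝ} (hx : 0 < x) (hxp : x < p) (hz : 0 ≤ z) (hzx : z ≤ x / p) (H : ℕ) :
    ∃ C L : ℝ, 0 < C ∧ 0 < L ∧ ∀ (a : ℂ), ‖a‖ ≤ H → ∀ r : ℕ → ℂ,
      (∀ k : ℕ, ‖r k‖ ≤ (L * x + k) / (L * p + k)) →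
      (Summable fun m => ‖bincoef a m * ∏ k ∈ Finset.range m, r k‖) ∧
      ∀ e : ℝ, 0 ≤ e → (∀ k : ℕ, ‖r k - z‖ ≤ e * (k + 1)) →
        ‖∑' m, bincoef a m * ∏ k ∈ Finset.range m, r k - (1 - (z : ℂ)) ^ (-a)‖ ≤ C * e := by
  have hp : 0 < p := hx.trans hxp
  have hd : 0 < p - x := by linarith
  -- The first bound gives `1 ≤ L p`; the second makes the majorant decay like `m^(-H-4)`.
  obtain ⟨L, hL⟩ : ∃ L : ℝ, 1 / p ≤ L ∧ ((H + 4 : ℕ) : ℝ) / (p - x) ≤ L :=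
    ⟨max _ _, le_max_left _ _, le_max_right _ _⟩
  obtain ⟨hL1, hL2⟩ := hL
  have hL0 : 0 < L := (by positivity : 0 < 1 / p).trans_le hL1
  have hD : 1 ≤ L * p := by rwa [div_le_iff₀ hp] at hL1
  have hM : L * x + ((H + 4 : ℕ) : ℝ) ≤ L * p := by
    rw [div_le_iff₀ hd] at hL2; linarith
  set ρ : ℕ → ℝ := fun k => (L * x + k) / (L * p + k) with hρ
  set W : ℕ → ℝ := fun m => ∏ k ∈ Finset.range m, ρ k with hW
  have hρpos : ∀ k, 0 < ρ k := fun k => by simp only [hρ]; positivity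
  have hWpos : ∀ m, 0 < W m := fun m => Finset.prod_pos fun k _ => hρpos k
  have hWle : ∀ m, W m ≤ (L * p) ^ (H + 4) / ((m : ℝ) + 1) ^ (H + 4) := fun m => by
    refine (prod_le_pow (M := H + 4) (by positivity) hD hM m).trans ?_
    rw [← div_pow]
    have : (m : ℝ) + 1 ≤ L * p + m := by linarith
    gcongr
  have hbase : Summable fun m : ℕ => (L * p) ^ (H + 4) * (1 / ((m + 1 : ℕ) : ℝ) ^ 2) :=
    ((summable_nat_add_iff 1).2 (Real.summable_one_div_nat_pow.2 one_lt_two)).mul_left _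
  have hmaj : ∀ m : ℕ, ((m : ℝ) + 1) ^ H * W m * ((m : ℝ) + 1) ^ 2 ≤
      (L * p) ^ (H + 4) * (1 / ((m + 1 : ℕ) : ℝ) ^ 2) := fun m => by
    calc _ ≤ ((m : ℝ) + 1) ^ H * ((L * p) ^ (H + 4) / ((m : ℝ) + 1) ^ (H + 4)) *
          ((m : ℝ) + 1) ^ 2 := by have := hWle m; gcongr
      _ = _ := by push_cast; field_simp; ring
  set T := ∑' m : ℕ, (L * p) ^ (H + 4) * (1 / ((m + 1 : ℕ) : ℝ) ^ 2) with hT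
  have hT0 : 0 < T := hbase.tsum_pos (fun m => by positivity) 0 (by positivity)
  have hρ0 : 0 < x / p := by positivity
  refine ⟨(x / p)⁻¹ * T, L, by positivity, hL0, fun a ha r hr => ?_⟩
  have hPW : ∀ m, ‖∏ k ∈ Finset.range m, r k‖ ≤ W m := fun m => by
    rw [norm_prod]
    exact Finset.prod_le_prod (fun _ _ => norm_nonneg _) fun k _ => hr k
  have hsum : Summable fun m => ‖bincoef a m * ∏ k ∈ Finset.range m, r k‖ := by
    refine hbase.of_nonneg_of_le (fun _ => norm_nonneg _) fun m => le_trans ?_ (hmaj m)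
    rw [norm_mul]
    have h1 : (1 : ℝ) ≤ ((m : ℝ) + 1) ^ 2 := one_le_pow₀ (by simp)
    have h2 := norm_bincoef_le_pow ha m
    have h3 := hPW m
    have h4 := (hWpos m).le
    calc _ ≤ ((m : ℝ) + 1) ^ H * W m * 1 := by rw [mul_one]; gcongr
      _ ≤ _ := by gcongr
  refine ⟨hsum, fun e he hrz => ?_⟩
  have hz1 : z < 1 := hzx.trans_lt ((div_lt_one hp).2 hxp)
  have hb := hasSum_binomial a (t := (z : ℂ)) (by
    rw [norm_real, Real.norm_of_nonneg hz]; exact hz1)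
  have hdiff := hsum.of_norm.hasSum.sub hb
  rw [← hdiff.tsum_eq]
  have hbd : ∀ m, ‖bincoef a m * ∏ k ∈ Finset.range m, r k - bincoef a m * (z : ℂ) ^ m‖ ≤
      e / (x / p) * ((L * p) ^ (H + 4) * (1 / ((m + 1 : ℕ) : ℝ) ^ 2)) := fun m => by
    have h0 := norm_prod_sub_pow_le (ρ := ρ) hz hρ0 hzx (fun k => by
      simp only [hρ]
      rw [div_le_div_iff₀ hp (by positivity)]
      have : (0 : ℝ) ≤ k := k.cast_nonneg
      nlinarith) he hr hrz m
    have h2 := norm_bincoef_le_pow ha m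
    have h4 := (hWpos m).le
    rw [← mul_sub, norm_mul]
    calc _ ≤ ((m : ℝ) + 1) ^ H * (e / (x / p) * W m * (m : ℝ) ^ 2) := by gcongr
      _ ≤ ((m : ℝ) + 1) ^ H * (e / (x / p) * W m * ((m : ℝ) + 1) ^ 2) := by gcongr; linarith
      _ = e / (x / p) * (((m : ℝ) + 1) ^ H * W m * ((m : ℝ) + 1) ^ 2) := by ring
      _ ≤ _ := by have := hmaj m; gcongr
  refine (tsum_of_norm_bounded (hbase.hasSum.mul_left _) hbd).trans (le_of_eq ?_)
  rw [← hT, div_eq_mul_inv]; ring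

/-! ### Uniform bounds along the ray `a + np` -/

lemma norm_add_nat_le (α : ℂ) (k : ℕ) : ‖α + k‖ ≤ ‖α‖ + k :=
  (norm_add_le _ _).trans (by simp)

lemma re_add_nat_le (γ : ℂ) (k : ℕ) : γ.re + k ≤ ‖γ + k‖ := by
  simpa using re_le_norm (γ + k)

lemma norm_div_add_nat_le_one {β δ : ℂ} (h : ‖β‖ ≤ δ.re) (k : ℕ) :
    ‖(β + k) / (δ + k)‖ ≤ 1 := by
  have h1 := norm_add_nat_le β k
  have h2 := re_add_nat_le δ k
  have hk : (0 : ℝ) ≤ k := k.cast_nonneg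
  rw [norm_div]
  exact div_le_one_of_le₀ (by linarith) (norm_nonneg _)

/-- The majorant of one factor of the transformed series. As `(n x + k) / (n p + k)` decreases in
`n`, its value at `n = L` serves for all `n ≥ L`. -/
lemma norm_factor_le {x p L n : ℝ} (hx : 0 < x) (hxp : x < p) (hL : 0 < L) (hn : L ≤ n)
    {α β γ δ : ℂ} (hα : ‖α‖ ≤ n * x) (hγ : n * p ≤ γ.re) (hβ : ‖β‖ ≤ δ.re)
    (k : ℕ) :
    ‖(α + k) * (β + k) / ((γ + k) * (δ + k))‖ ≤ (L * x + k) / (L * p + k) := by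
  have h1 := norm_add_nat_le α k
  have h2 := re_add_nat_le γ k
  have h3 := norm_div_add_nat_le_one hβ k
  have hk : (0 : ℝ) ≤ k := k.cast_nonneg
  have hp : 0 < p := hx.trans hxp
  have hn0 : 0 < n := hL.trans_le hn
  have h4 : 0 < n * p := by positivity
  have h5 : 0 < L * p := by positivity
  rw [mul_div_mul_comm, norm_mul]
  calc _ ≤ ‖(α + k) / (γ + k)‖ * 1 := by gcongr
    _ ≤ (n * x + k) / (n * p + k) := by
      rw [mul_one, norm_div]
      have : 0 ≤ n * x + k := by positivity
      gcongr <;> linarith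
    _ ≤ _ := by
      rw [div_le_div_iff₀ (by linarith) (by linarith)]
      have : 0 ≤ (n - L) * (p - x) * k := by
        have h6 : 0 ≤ n - L := by linarith
        have h7 : 0 ≤ p - x := by linarith
        positivity
      nlinarith

lemma poch_quot (α β γ δ : ℂ) (m : ℕ) :
    poch α m * poch β m / (poch γ m * poch δ m) =
      ∏ k ∈ Finset.range m, (α + k) * (β + k) / ((γ + k) * (δ + k)) := by
  simp only [poch, Finset.prod_div_distrib, Finset.prod_mul_distrib]

open Filter in
lemma eventually_le_mul (C : ℝ) {ε : ℝ} (hε : 0 < ε) : ∀ᶠ n : ℕ in atTop, C ≤ n * ε :=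
  (tendsto_natCast_atTop_atTop.atTop_mul_const hε).eventually_ge_atTop C

open Filter in
lemma eventually_norm_le (c : ℂ) {x x' : ℝ} (hx : 0 ≤ x) (h : x < x') :
    ∀ᶠ n : ℕ in atTop, ‖c + n * (x : ℂ)‖ ≤ n * x' := by
  filter_upwards [eventually_le_mul ‖c‖ (sub_pos.2 h)] with n hn
  have := norm_add_le c (n * (x : ℂ))
  rw [norm_mul, norm_natCast, norm_real, Real.norm_of_nonneg hx] at this
  linarith

open Filter in
lemma eventually_le_re (c : ℂ) {x x' : ℝ} (h : x' < x) :
    ∀ᶠ n : ℕ in atTop, n * x' ≤ (c + n * (x : ℂ)).re := by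
  filter_upwards [eventually_le_mul (-c.re) (sub_pos.2 h)] with n hn
  have : (c + n * (x : ℂ)).re = c.re + n * x := by simp
  rw [this]; linarith

open Filter in
/-- Along a horizontal ray the modulus exceeds the real part by an arbitrarily small amount. -/
lemma eventually_norm_le_re_add (c : ℂ) {p ε : ℝ} (hp : 0 < p) (hε : 0 < ε) :
    ∀ᶠ n : ℕ in atTop, ‖c + n * (p : ℂ)‖ ≤ (c + n * (p : ℂ)).re + ε := by
  filter_upwards [eventually_le_mul (c.im ^ 2 / (2 * ε) - c.re) hp,
    eventually_le_mul (-c.re) hp] with n h1 h2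
  have hre : (c + n * (p : ℂ)).re = c.re + n * p := by simp
  have him : (c + n * (p : ℂ)).im = c.im := by simp
  refine le_of_sq_le_sq ?_ (by rw [hre]; linarith)
  rw [Complex.sq_norm, normSq_apply, him, hre]
  have h3 : c.im ^ 2 ≤ (c.re + n * p) * (2 * ε) := by
    rw [← div_le_iff₀ (by positivity)]; linarith
  nlinarith [sq_nonneg ε]

open Filter in
/-- The quotient of two shifted linear forms is `x / p + O((k + 1) / n)`, uniformly in `k`. -/
lemma ratio_approx (c d : ℂ) {x p : ℝ} (hxp : x < p) (hp : 0 < p) :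
    ∃ E : ℝ, 0 < E ∧ ∀ᶠ n : ℕ in atTop, ∀ k : ℕ,
      ‖(c + n * (x : ℂ) + k) / (d + n * (p : ℂ) + k) - ((x / p : ℝ) : ℂ)‖ ≤ E / n * (k + 1) := by
  refine ⟨(‖p * c - x * d‖ + (p - x)) / (p * (p / 2)), by
    have : 0 < p - x := by linarith
    positivity, ?_⟩
  filter_upwards [eventually_le_re d (show p / 2 < p by linarith), eventually_gt_atTop 0]
    with n h1 hn k
  have hn0 : (0 : ℝ) < n := by exact_mod_cast hn
  have hk : (0 : ℝ) ≤ k := k.cast_nonneg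
  have h2 : n * (p / 2) ≤ ‖d + n * (p : ℂ) + k‖ := by
    have := re_add_nat_le (d + n * (p : ℂ)) k
    linarith
  have hpos : 0 < n * (p / 2) := by positivity
  have hne : d + n * (p : ℂ) + k ≠ 0 := norm_pos_iff.1 (hpos.trans_le h2)
  have hpc : (p : ℂ) ≠ 0 := by exact_mod_cast hp.ne'
  have e : (c + n * (x : ℂ) + k) / (d + n * (p : ℂ) + k) - ((x / p : ℝ) : ℂ) =
      (p * c - x * d + (p - x : ℝ) * k) / (p * (d + n * (p : ℂ) + k)) := by
    push_cast
    rw [div_sub_div _ _ hne hpc, mul_comm (p : ℂ) (d + _ + _)]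
    congr 1; ring
  have hpx : 0 ≤ p - x := by linarith
  have h3 : ‖p * c - x * d + (p - x : ℝ) * k‖ ≤ (‖p * c - x * d‖ + (p - x)) * (k + 1) := by
    refine (norm_add_le _ _).trans ?_
    rw [norm_mul, norm_real, norm_natCast, Real.norm_of_nonneg hpx]
    nlinarith [norm_nonneg (p * c - x * d)]
  rw [e, norm_div, norm_mul, norm_real, Real.norm_of_nonneg hp.le]
  calc _ ≤ (‖p * c - x * d‖ + (p - x)) * (k + 1) / (p * (n * (p / 2))) := by gcongr
    _ = _ := by field_simp

open Filter in
/-- A product of two sequences of the form `1 + O(1/n)` is again of this form. -/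
lemma mul_near_one {X Y : ℕ → ℂ} (hX : ∃ K : ℝ, ∀ᶠ n : ℕ in atTop, ‖X n - 1‖ ≤ K / n)
    (hY : ∃ K : ℝ, ∀ᶠ n : ℕ in atTop, ‖Y n - 1‖ ≤ K / n) :
    ∃ K : ℝ, ∀ᶠ n : ℕ in atTop, ‖X n * Y n - 1‖ ≤ K / n := by
  obtain ⟨K, hK⟩ := hX
  obtain ⟨J, hJ⟩ := hY
  refine ⟨K * (1 + |J|) + J, ?_⟩
  filter_upwards [hK, hJ, eventually_ge_atTop 1] with n h1 h2 hn
  have hn1 : (1 : ℝ) ≤ n := by exact_mod_cast hn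
  have h3 : ‖Y n‖ ≤ 1 + |J| := by
    have e : Y n = (Y n - 1) + 1 := by ring
    have h4 := norm_add_le (Y n - 1) 1
    rw [← e, norm_one] at h4
    have h5 : J / n ≤ |J| :=
      (div_le_div_of_nonneg_right (le_abs_self J) (by linarith)).trans
        (div_le_self (abs_nonneg J) hn1)
    linarith
  have e : X n * Y n - 1 = (X n - 1) * Y n + (Y n - 1) := by ring
  have h0 : 0 ≤ K / n := (norm_nonneg _).trans h1
  calc _ ≤ ‖X n - 1‖ * ‖Y n‖ + ‖Y n - 1‖ := by
        rw [e]
        refine (norm_add_le _ _).trans ?_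
        rw [norm_mul]
    _ ≤ K / n * (1 + |J|) + J / n := by gcongr
    _ = _ := by ring

open Filter in
lemma gamma_ratio_nat (a : ℂ) {s : ℂ} (hs : 0 < s.re) {p : ℝ} (hp : 0 < p) :
    ∃ K : ℝ, ∀ᶠ n : ℕ in atTop,
      ‖Gamma (a + n * (p : ℂ)) / Gamma (a + n * (p : ℂ) + s) * (n * (p : ℂ)) ^ s - 1‖ ≤ K / n := by
  obtain ⟨K, R, h⟩ := gamma_ratio a hs
  refine ⟨K / p, ?_⟩
  filter_upwards [eventually_le_mul R hp] with n hn
  have := h _ hn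
  push_cast at this
  refine this.trans (le_of_eq ?_)
  rw [div_div, mul_comm p]

/-! ### The transformed series and the asymptotic formula -/

open Filter in
/-- Behaviour of the transformed series: it converges to the binomial series at
`z = x₁ x₂ / (p₁ p₂)` with error `O(1/n)`. -/
lemma transformed_approx (s c1 c2 d1 d2 : ℂ) {x1 x2 p1 p2 : ℝ} (hx1 : 0 < x1) (h1 : x1 < p1)
    (hx2 : 0 < x2) (h2 : x2 < p2) :
    ∃ K : ℝ, ∀ᶠ n : ℕ in atTop,
      ‖(∑' m : ℕ, bincoef s m * (poch (c1 + n * (x1 : ℂ)) m * poch (c2 + n * (x2 : ℂ)) m /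
        (poch (d1 + n * (p1 : ℂ)) m * poch (d2 + n * (p2 : ℂ)) m))) *
        (1 - ((x1 / p1 * (x2 / p2) : ℝ) : ℂ)) ^ s - 1‖ ≤ K / n := by
  have hp1 : 0 < p1 := hx1.trans h1
  have hp2 : 0 < p2 := hx2.trans h2
  have hq2 : x2 / p2 < 1 := (div_lt_one hp2).2 h2
  set z : ℝ := x1 / p1 * (x2 / p2) with hz
  have hz0 : 0 < z := by positivity
  -- Strict room between `x₁` and `p₁`, `x₂` and `p₂` absorbs the bounded parts of the parameters.
  obtain ⟨x', hx', hx'm⟩ := exists_between h1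
  obtain ⟨p', hp', hp'm⟩ := exists_between hx'm
  obtain ⟨m2, hm2, hm2'⟩ := exists_between h2
  have hzx : z ≤ x' / p' := by
    have e1 : x1 / p1 ≤ x' / p' := by
      have : 0 < x' := hx1.trans hx'
      have : 0 < p' := this.trans hp'
      gcongr
    refine le_trans ?_ e1
    exact mul_le_of_le_one_right (by positivity) hq2.le
  obtain ⟨H, hH⟩ := exists_nat_ge ‖s‖
  obtain ⟨C, L, hC, hL, hCL⟩ := sum_approx (hx1.trans hx') hp' hz0.le hzx H
  obtain ⟨E1, hE1, hR1⟩ := ratio_approx c1 d1 h1 hp1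
  obtain ⟨E2, hE2, hR2⟩ := ratio_approx c2 d2 h2 hp2
  refine ⟨C * (E1 + E2) * ‖(1 - (z : ℂ)) ^ s‖, ?_⟩
  filter_upwards [hR1, hR2, eventually_norm_le c1 hx1.le hx', eventually_norm_le c2 hx2.le hm2,
    eventually_le_re d1 hp'm, eventually_le_re d2 hm2', eventually_gt_atTop 0,
    eventually_le_mul L one_pos] with n r1 r2 n1 n2 e1 e2 hn0 hnL
  have hn : (0 : ℝ) < n := by exact_mod_cast hn0
  rw [mul_one] at hnL
  have hm0 : 0 < m2 := hx2.trans hm2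
  have hx'0 := hx1.trans hx'
  have hp'0 := hx'0.trans hp'
  simp only [poch_quot]
  have key := (hCL s hH
    (fun k => (c1 + n * (x1 : ℂ) + k) * (c2 + n * (x2 : ℂ) + k) /
      ((d1 + n * (p1 : ℂ) + k) * (d2 + n * (p2 : ℂ) + k)))
    (fun k => norm_factor_le hx'0 hp' hL hnL n1 e1 (n2.trans e2) k)).2
    ((E1 + E2) / n) (by positivity) (fun k => by
      rw [mul_div_mul_comm, hz]
      set f := (c1 + n * (x1 : ℂ) + k) / (d1 + n * (p1 : ℂ) + k)
      set g := (c2 + n * (x2 : ℂ) + k) / (d2 + n * (p2 : ℂ) + k)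
      have hf : ‖f‖ ≤ 1 := norm_div_add_nat_le_one
        (n1.trans (le_trans (by gcongr) e1)) k
      have hg : ‖((x2 / p2 : ℝ) : ℂ)‖ ≤ 1 := by
        rw [norm_real, Real.norm_of_nonneg (by positivity)]; exact hq2.le
      have e : f * g - ((x1 / p1 * (x2 / p2) : ℝ) : ℂ) = f * (g - ((x2 / p2 : ℝ) : ℂ)) +
          (f - ((x1 / p1 : ℝ) : ℂ)) * ((x2 / p2 : ℝ) : ℂ) := by push_cast; ring
      have r1 := r1 k
      have r2 := r2 k
      calc _ ≤ ‖f‖ * ‖g - ((x2 / p2 : ℝ) : ℂ)‖ +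
            ‖f - ((x1 / p1 : ℝ) : ℂ)‖ * ‖((x2 / p2 : ℝ) : ℂ)‖ := by
            rw [e]
            refine (norm_add_le _ _).trans ?_
            rw [norm_mul, norm_mul]
        _ ≤ 1 * (E2 / n * (k + 1)) + E1 / n * (k + 1) * 1 := by gcongr
        _ = _ := by ring)
  have hz1 : z < 1 := hzx.trans_lt ((div_lt_one hp'0).2 hp')
  have hne : (1 - (z : ℂ)) ≠ 0 := by
    have : (1 - z : ℝ) ≠ 0 := by linarith
    exact_mod_cast this
  have hY : (1 - (z : ℂ)) ^ (-s) * (1 - (z : ℂ)) ^ s = 1 := by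
    rw [← cpow_add _ _ hne]; simp
  have hfac : ∀ S : ℂ, S * (1 - (z : ℂ)) ^ s - 1 =
      (S - (1 - (z : ℂ)) ^ (-s)) * (1 - (z : ℂ)) ^ s := fun S => by rw [sub_mul, hY]
  rw [hfac, norm_mul]
  calc _ ≤ C * ((E1 + E2) / n) * ‖(1 - (z : ℂ)) ^ s‖ := by gcongr
    _ = _ := by ring

open Filter in
/-- Thomae's transformation is available along the ray for large `n`: the bounded imaginary parts
make `‖a₁ + n p₁‖` and `‖a₂ + n p₂‖` exceed the real parts by less than `Re s / 4`. -/
lemma eventually_thomae {p0 p1 p2 q1 q2 : ℝ} (hbal : q1 + q2 = p0 + p1 + p2)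
    (h1 : q1 - p0 < p1) (h1' : 0 < q1 - p0) (h2 : q2 - p0 < p2) (h2' : 0 < q2 - p0)
    {a0 a1 a2 b1 b2 s : ℂ} (hs : s = b1 + b2 - a0 - a1 - a2) (hs0 : 0 < s.re) :
    ∀ᶠ n : ℕ in atTop,
      ∑' j : ℕ, (Gamma (a0 + n * (p0 : ℂ) + j) * Gamma (a1 + n * (p1 : ℂ) + j) *
          Gamma (a2 + n * (p2 : ℂ) + j)) /
        (Gamma (1 + j) * Gamma (b1 + n * (q1 : ℂ) + j) * Gamma (b2 + n * (q2 : ℂ) + j)) =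
      Gamma s * (Gamma (a1 + n * (p1 : ℂ)) / Gamma (a1 + n * (p1 : ℂ) + s)) *
        (Gamma (a2 + n * (p2 : ℂ)) / Gamma (a2 + n * (p2 : ℂ) + s)) *
        ∑' m : ℕ, bincoef s m * (poch (b1 - a0 + n * ((q1 - p0 : ℝ) : ℂ)) m *
          poch (b2 - a0 + n * ((q2 - p0 : ℝ) : ℂ)) m /
          (poch (a1 + s + n * (p1 : ℂ)) m * poch (a2 + s + n * (p2 : ℂ)) m)) := by
  have hp0 : 0 < p0 := by linarith
  have hp1 : 0 < p1 := by linarith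
  have hp2 : 0 < p2 := by linarith
  obtain ⟨x', hx', hx'm⟩ := exists_between h1
  obtain ⟨p', hp', hp'm⟩ := exists_between hx'm
  obtain ⟨m2, hm2, hm2'⟩ := exists_between h2
  obtain ⟨m1, hm1, hm1'⟩ := exists_between (show q1 - p0 < q1 by linarith)
  obtain ⟨m3, hm3, hm3'⟩ := exists_between hm1'
  have hx'0 : 0 < x' := h1'.trans hx'
  have hm20 : 0 < m2 := h2'.trans hm2
  obtain ⟨H, hH⟩ := exists_nat_ge ‖s‖
  -- Only the summability part of `sum_approx` is needed, hence the choice `z = 0`.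
  obtain ⟨C, L, hC, hL, hCL⟩ := sum_approx hx'0 hp' le_rfl
    (show (0 : ℝ) ≤ x' / p' by have := hx'0.trans hp'; positivity) H
  filter_upwards [eventually_norm_le (b1 - a0) h1'.le hx', eventually_norm_le (b2 - a0) h2'.le hm2,
    eventually_norm_le (b1 - a0) h1'.le hm1, eventually_le_re b1 hm3',
    eventually_le_re (b2 - a0) (half_lt_self h2'),
    eventually_le_re a1 hp'm, eventually_le_re a2 hm2',
    eventually_norm_le_re_add a1 hp1 (show 0 < s.re / 4 by linarith),
    eventually_norm_le_re_add a2 hp2 (show 0 < s.re / 4 by linarith),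
    eventually_gt_atTop 0, eventually_le_mul L one_pos]
    with n n1 n2 n3 e0 e00 e1 e2 f1 f2 hn0 hnL
  have hn : (0 : ℝ) < n := by exact_mod_cast hn0
  rw [mul_one] at hnL
  have hp'0 := hx'0.trans hp'
  set A0 := a0 + n * (p0 : ℂ) with hA0
  set A1 := a1 + n * (p1 : ℂ) with hA1
  set A2 := a2 + n * (p2 : ℂ) with hA2
  set B1 := b1 + n * (q1 : ℂ) with hB1
  set B2 := b2 + n * (q2 : ℂ) with hB2
  have hα : b1 - a0 + n * ((q1 - p0 : ℝ) : ℂ) = B1 - A0 := by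
    rw [hB1, hA0]; push_cast; ring
  have hβ : b2 - a0 + n * ((q2 - p0 : ℝ) : ℂ) = B2 - A0 := by
    rw [hB2, hA0]; push_cast; ring
  have hbalc : (q1 : ℂ) + q2 = p0 + p1 + p2 := by exact_mod_cast hbal
  have hs' : s = B1 + B2 - A0 - A1 - A2 := by
    rw [hs, hB1, hB2, hA0, hA1, hA2]
    linear_combination -(n : ℂ) * hbalc
  rw [hα] at n1 n3
  rw [hβ] at n2 e00
  have h3 : a1 + s + n * (p1 : ℂ) = A1 + s := by rw [hA1]; ring
  have h4 : a2 + s + n * (p2 : ℂ) = A2 + s := by rw [hA2]; ring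
  rw [hα, hβ, h3, h4]
  have hA1p : 0 < A1.re := lt_of_lt_of_le (by positivity) e1
  have hA2p : 0 < A2.re := lt_of_lt_of_le (by positivity) e2
  have hre : (B1 + B2 - A0).re = s.re + A1.re + A2.re := by
    have : B1 + B2 - A0 = s + A1 + A2 := by rw [hs']; ring
    rw [this]; simp
  have g1 := re_le_norm A1
  have g2 := re_le_norm A2
  refine thomae hs' hA1p hA2p (lt_of_lt_of_le (by positivity) e00) ?_ (by rw [hre]; linarith) ?_
  · exact n3.trans_lt (lt_of_lt_of_le (by gcongr) e0)
  · simp only [poch_quot]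
    refine (hCL _ ?_ _ fun k => norm_factor_le hx'0 hp' hL hnL ?_ ?_ ?_ k).1
    · rw [norm_real, hre, Real.norm_eq_abs, abs_of_nonneg (by linarith)]
      exact le_trans (by linarith [re_le_norm s]) hH
    · simpa using n1
    · rw [ofReal_re, hre]; linarith
    · rw [ofReal_re, hre, norm_real, norm_norm]; linarith

/-- Let `p = (p₀,p₁,p₂;q₁,q₂) ∈ ℝ⁵` with `s(p) = 0`,
`p₁ > q₁−p₀ > 0`, `p₂ > q₂−p₀ > 0`, and `a ∈ ℂ⁵` with `Re s(a) > 0` such that all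
`aᵢ + n pᵢ ∉ ℤ≤0`.  Then
`₃f₂(a+np) = Γ(s(a))·s₂(p)^{−s(a)}·n^{−2s(a)}·(1 + O(1/n))` as `n → ∞`, where
`s₂(p) = p₀p₁+p₁p₂+p₂p₀−q₁q₂`. -/
theorem threeF2_recessive_asymptotics (p0 p1 p2 q1 q2 : ℝ)
    (hbal : q1 + q2 = p0 + p1 + p2)
    (h1 : q1 - p0 < p1) (h1' : 0 < q1 - p0)
    (h2 : q2 - p0 < p2) (h2' : 0 < q2 - p0)
    (a0 a1 a2 b1 b2 : ℂ)
    (hs : 0 < (b1 + b2 - a0 - a1 - a2).re)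
    (hdef : ∀ n : ℕ, ∀ m : ℤ, m ≤ 0 →
      a0 + (n : ℂ) * (p0 : ℂ) ≠ (m : ℂ) ∧ a1 + (n : ℂ) * (p1 : ℂ) ≠ (m : ℂ) ∧
        a2 + (n : ℂ) * (p2 : ℂ) ≠ (m : ℂ)) :
    ∃ K : ℝ, 0 < K ∧ ∃ N : ℕ, ∀ n : ℕ, N ≤ n →
      ‖(∑' j : ℕ,
            (Gamma (a0 + (n : ℂ) * (p0 : ℂ) + j) * Gamma (a1 + (n : ℂ) * (p1 : ℂ) + j) *
                Gamma (a2 + (n : ℂ) * (p2 : ℂ) + j)) /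
              (Gamma (1 + j) * Gamma (b1 + (n : ℂ) * (q1 : ℂ) + j) *
                Gamma (b2 + (n : ℂ) * (q2 : ℂ) + j))) /
          (Gamma (b1 + b2 - a0 - a1 - a2) *
              (((p0 * p1 + p1 * p2 + p2 * p0 - q1 * q2 : ℝ) : ℂ) ^
                (-(b1 + b2 - a0 - a1 - a2))) *
            (n : ℂ) ^ (-2 * (b1 + b2 - a0 - a1 - a2))) - 1‖ ≤ K / n := by
  set s := b1 + b2 - a0 - a1 - a2 with hsdef
  have hp0 : 0 < p0 := by linarith
  have hp1 : 0 < p1 := by linarith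
  have hp2 : 0 < p2 := by linarith
  set x1 := q1 - p0 with hx1
  set x2 := q2 - p0 with hx2
  set z : ℝ := x1 / p1 * (x2 / p2) with hz
  have hz1 : z < 1 := mul_lt_one_of_nonneg_of_lt_one_left (by positivity)
    ((div_lt_one hp1).2 h1) ((div_lt_one hp2).2 h2).le
  -- The constant `s₂(p)` factors through the limit ratio `z` of the transformed series.
  have hs2 : p0 * p1 + p1 * p2 + p2 * p0 - q1 * q2 = p1 * p2 * (1 - z) := by
    rw [hz, hx1, hx2]
    field_simp
    linear_combination -p0 * hbal
  have hX := mul_near_one (mul_near_one (gamma_ratio_nat a1 hs hp1) (gamma_ratio_nat a2 hs hp2))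
    (transformed_approx s (b1 - a0) (b2 - a0) (a1 + s) (a2 + s) h1' h1 h2' h2)
  obtain ⟨K, hK⟩ := hX
  obtain ⟨N, hN⟩ := Filter.eventually_atTop.1
    ((hK.and (eventually_thomae hbal h1 h1' h2 h2' hsdef hs)).and (Filter.eventually_gt_atTop 0))
  refine ⟨|K| + 1, by positivity, N, fun n hn => ?_⟩
  obtain ⟨⟨hb, hT⟩, hn0⟩ := hN n hn
  have hnr : (0 : ℝ) < n := by exact_mod_cast hn0
  have hzpos : 0 < 1 - z := by linarith
  have hGs := Gamma_ne_zero_of_re_pos hs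
  have hcp : ∀ {t : ℝ}, 0 < t → ∀ w : ℂ, (t : ℂ) ^ w ≠ 0 := fun ht w => by
    have : (_ : ℂ) ≠ 0 := ofReal_ne_zero.2 ht.ne'
    simp [cpow_eq_zero_iff, this]
  rw [← hz] at hb
  rw [← hx1, ← hx2] at hT
  rw [hT]
  refine le_trans (le_of_eq ?_) (hb.trans ?_)
  · congr 2
    rw [hs2, cpow_neg]
    have e1 : ((p1 * p2 * (1 - z) : ℝ) : ℂ) ^ s =
        (p1 : ℂ) ^ s * (p2 : ℂ) ^ s * (1 - (z : ℂ)) ^ s := by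
      have e : (1 - (z : ℂ)) = ((1 - z : ℝ) : ℂ) := by push_cast; rfl
      rw [e, ofReal_mul, mul_cpow_ofReal_nonneg (by positivity) hzpos.le, ofReal_mul,
        mul_cpow_ofReal_nonneg hp1.le hp2.le]
    have e2 : ∀ {p : ℝ}, 0 < p → ((n : ℂ) * (p : ℂ)) ^ s = (n : ℂ) ^ s * (p : ℂ) ^ s := fun hp => by
      simpa using mul_cpow_ofReal_nonneg hnr.le hp.le s
    have e3 : (n : ℂ) ^ (-2 * s) = ((n : ℂ) ^ s * (n : ℂ) ^ s)⁻¹ := by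
      rw [← cpow_add _ _ (by exact_mod_cast hn0.ne'), ← cpow_neg]
      congr 1; ring
    have k1 := hcp hp1 s
    have k2 := hcp hp2 s
    have k3 := hcp hzpos s
    have k4 : (n : ℂ) ^ s ≠ 0 := by simpa using hcp hnr s
    push_cast at k3
    rw [e1, e2 hp1, e2 hp2, e3]
    field_simp
  · gcongr
    linarith [le_abs_self K]
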